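/- For every n ≥ 2 and every k with 2 ≤ k ≤ n - 1, the ordered Stirling numbers satisfy the strict log-concavity inequality Surj(n,k)^2 > Surj(n,k-1) · Surj(n,k+1). -/

import Mathlib

/-- The number of surjective functions from `Fin n` onto `Fin k`
(the ordered Stirling number `k! * S(n,k)`). -/
def Surj (n k : ℕ) : ℕ :=
  Fintype.card {f : Fin n → Fin k // Function.Surjective f}

open Finset in
theorem card_filter_range_eq_compl_singleton (n k : ℕ) (c : Fin (k + 1)) :
    #{g : Fin n → Fin (k + 1) | Set.range g = {c}ᶜ} = Surj n k := by
  rw [Surj, Fintype.card_subtype]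
  symm
  refine card_bij (fun h _ => c.succAbove ∘ h) ?_ ?_ ?_
  · intro h hh
    have hs : Function.Surjective h := by simpa using hh
    simp [Set.range_comp, hs.range_eq]
  · intro h₁ _ h₂ _ h
    exact c.succAbove_right_injective.comp_left h
  · intro g hg
    have hr : Set.range g = {c}ᶜ := by simpa using hg
    have hne : ∀ i, ∃ j, c.succAbove j = g i := fun i =>
      Fin.exists_succAbove_eq (by
        have : g i ∈ Set.range g := ⟨i, rfl⟩
        simpa [hr] using this)
    choose h hh using hne
    refine ⟨h, ?_, funext hh⟩
    simp only [mem_filter, mem_univ, true_and]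
    intro j
    have : c.succAbove j ∈ Set.range g := by simp [hr]
    obtain ⟨i, hi⟩ := this
    exact ⟨i, c.succAbove_right_injective ((hh i).trans hi)⟩

theorem Fin.surjective_cons_iff {n : ℕ} {α : Type*} (c : α) (g : Fin n → α) :
    Function.Surjective (Fin.cons c g : Fin (n + 1) → α) ↔
      Function.Surjective g ∨ Set.range g = {c}ᶜ := by
  rw [← Set.range_eq_univ, Fin.range_cons, ← Set.range_eq_univ]
  by_cases hc : c ∈ Set.range g
  · rw [Set.insert_eq_of_mem hc]
    refine ⟨Or.inl, ?_⟩
    rintro (h | h)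
    · exact h
    · simp [h] at hc
  · constructor
    · intro h
      right
      ext x
      have hx : x ∈ insert c (Set.range g) := h ▸ Set.mem_univ x
      rcases hx with rfl | hx
      · simp [hc]
      · simp only [hx, Set.mem_compl_iff, Set.mem_singleton_iff, true_iff]
        rintro rfl
        exact hc hx
    · rintro (h | h)
      · simp [h] at hc
      · rw [h, Set.insert_eq, Set.union_compl_self]

open Finset in
theorem Surj_succ_succ (n k : ℕ) :
    Surj (n + 1) (k + 1) = (k + 1) * (Surj n (k + 1) + Surj n k) := by
  have hfiber (c : Fin (k + 1)) :
      Fintype.card {g : Fin n → Fin (k + 1) //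
        Function.Surjective (Fin.cons c g : Fin (n + 1) → Fin (k + 1))} =
      Surj n (k + 1) + Surj n k := by
    classical
    rw [Fintype.card_subtype, ← card_filter_range_eq_compl_singleton n k c, Surj,
      Fintype.card_subtype, ← card_union_of_disjoint, ← filter_or]
    · simp only [Fin.surjective_cons_iff]
    · refine disjoint_filter.2 fun g _ hg hr => ?_
      rw [hg.range_eq] at hr
      have : c ∈ ({c}ᶜ : Set (Fin (k + 1))) := hr ▸ Set.mem_univ c
      exact this rfl
  have e : {f : Fin (n + 1) → Fin (k + 1) // Function.Surjective f} ≃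
      Σ c : Fin (k + 1), {g : Fin n → Fin (k + 1) //
        Function.Surjective (Fin.cons c g : Fin (n + 1) → Fin (k + 1))} :=
    ((Fin.consEquiv fun _ => Fin (k + 1)).symm.subtypeEquiv fun f => by
      simp [Fin.consEquiv]).trans
      (Equiv.subtypeProdEquivSigmaSubtype fun (c : Fin (k + 1)) (g : Fin n → Fin (k + 1)) =>
        Function.Surjective (Fin.cons c g : Fin (n + 1) → Fin (k + 1)))
  rw [Surj, Fintype.card_congr e, Fintype.card_sigma]
  simp [hfiber]

theorem Surj_succ_zero (n : ℕ) : Surj (n + 1) 0 = 0 := by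
  simp [Surj]

theorem Surj_eq_zero_of_lt {n k : ℕ} (h : n < k) : Surj n k = 0 := by
  rw [Surj, Fintype.card_eq_zero_iff]
  refine ⟨fun ⟨f, hf⟩ => ?_⟩
  have := Fintype.card_le_of_surjective f hf
  simp only [Fintype.card_fin] at this
  omega

theorem Surj_pos {n k : ℕ} (hk : 0 < k) (h : k ≤ n) : 0 < Surj n k := by
  rw [Surj, Fintype.card_pos_iff]
  have : NeZero k := ⟨hk.ne'⟩
  exact ⟨⟨fun i => Fin.ofNat k i, fun j => ⟨⟨j, by omega⟩, by simp⟩⟩⟩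

/-- Adjacent sums of a log-concave sequence are log-concave. -/
theorem add_mul_add_le_add_sq {w x y z : ℕ} (hxz : x * z ≤ y ^ 2) (hwy : w * y ≤ x ^ 2)
    (hwz : w * z ≤ x * y) : (x + w) * (z + y) ≤ (y + x) ^ 2 := by
  linarith

theorem Surj_mul_le_mul_of_log_concave {n : ℕ}
    (h : ∀ k, Surj n k * Surj n (k + 2) ≤ Surj n (k + 1) ^ 2) (k : ℕ) :
    Surj n k * Surj n (k + 3) ≤ Surj n (k + 1) * Surj n (k + 2) := by
  rcases lt_or_ge n (k + 3) with hn | hn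
  · simp [Surj_eq_zero_of_lt hn]
  · have hpos : 0 < Surj n (k + 1) * Surj n (k + 2) :=
      Nat.mul_pos (Surj_pos (by omega) (by omega)) (Surj_pos (by omega) (by omega))
    refine le_of_mul_le_mul_right ?_ hpos
    linarith [Nat.mul_le_mul (h k) (h (k + 1))]

theorem Surj_succ_add_log_concave {n : ℕ}
    (h : ∀ k, Surj n k * Surj n (k + 2) ≤ Surj n (k + 1) ^ 2) (k : ℕ) :
    (Surj n (k + 1) + Surj n k) * (Surj n (k + 3) + Surj n (k + 2)) ≤
      (Surj n (k + 2) + Surj n (k + 1)) ^ 2 :=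
  add_mul_add_le_add_sq (h (k + 1)) (h k) (Surj_mul_le_mul_of_log_concave h k)

theorem Surj_log_concave (n k : ℕ) : Surj n k * Surj n (k + 2) ≤ Surj n (k + 1) ^ 2 := by
  induction n generalizing k with
  | zero => simp [Surj_eq_zero_of_lt (show 0 < k + 2 by omega)]
  | succ n ih =>
    cases k with
    | zero => simp [Surj_succ_zero]
    | succ k =>
      rw [Surj_succ_succ, Surj_succ_succ, Surj_succ_succ]
      calc (k + 1) * (Surj n (k + 1) + Surj n k) *
            ((k + 2 + 1) * (Surj n (k + 3) + Surj n (k + 2)))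
          = (k + 1) * (k + 3) *
            ((Surj n (k + 1) + Surj n k) * (Surj n (k + 3) + Surj n (k + 2))) := by ring
        _ ≤ (k + 2) ^ 2 * (Surj n (k + 2) + Surj n (k + 1)) ^ 2 :=
          Nat.mul_le_mul (by linarith) (Surj_succ_add_log_concave ih k)
        _ = ((k + 1 + 1) * (Surj n (k + 2) + Surj n (k + 1))) ^ 2 := by ring

/-- The ordered Stirling numbers are strictly log-concave:
for `n ≥ 2` and `2 ≤ k ≤ n - 1` we have
`Surj(n,k)² > Surj(n,k-1) · Surj(n,k+1)`. -/
theorem ordered_stirling_strict_log_concave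
    (n k : ℕ) (hn : 2 ≤ n) (hk : 2 ≤ k) (hkn : k ≤ n - 1) :
    Surj n (k - 1) * Surj n (k + 1) < Surj n k ^ 2 := by
  obtain ⟨n, rfl⟩ : ∃ m, n = m + 1 := ⟨n - 1, by omega⟩
  obtain ⟨k, rfl⟩ : ∃ j, k = j + 2 := ⟨k - 2, by omega⟩
  have hpos : 0 < (Surj n (k + 2) + Surj n (k + 1)) ^ 2 :=
    pow_pos (Nat.add_pos_left (Surj_pos (by omega) (by omega)) _) 2
  rw [show k + 2 - 1 = k + 1 by omega, Surj_succ_succ, Surj_succ_succ, Surj_succ_succ]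
  calc (k + 1) * (Surj n (k + 1) + Surj n k) *
        ((k + 2 + 1) * (Surj n (k + 3) + Surj n (k + 2)))
      = (k + 1) * (k + 3) *
        ((Surj n (k + 1) + Surj n k) * (Surj n (k + 3) + Surj n (k + 2))) := by ring
    _ ≤ (k + 1) * (k + 3) * (Surj n (k + 2) + Surj n (k + 1)) ^ 2 :=
      Nat.mul_le_mul_left _ (Surj_succ_add_log_concave (Surj_log_concave n) k)
    _ < (k + 2) ^ 2 * (Surj n (k + 2) + Surj n (k + 1)) ^ 2 :=
      Nat.mul_lt_mul_of_pos_right (by linarith) hpos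
    _ = ((k + 1 + 1) * (Surj n (k + 2) + Surj n (k + 1))) ^ 2 := by ring
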